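/- On the space W, the operators T_± and T̃_± satisfy the Heisenberg commutation relations [T₊, T̃₋] = [T̃₊, T₋] = 1 (the identity operator on W), while all other commutators vanish: [T₊, T₋] = [T̃₊, T̃₋] = [T₊, T̃₊] = [T₋, T̃₋] = 0. -/

import Mathlib

/-!
All operators are weighted shifts of the basis, so each relation is checked on a basis vector
|j,m⟩, where it becomes an identity between products of two square roots.

* T₋ and T̃₊ shift `j - m` by `+1` and `-1` and fix `j + m`; T₊ and T̃₋ shift `j + m` by `+1` and
  `-1` and fix `j - m`. The weights of the first pair depend only on `j - m`, those of the second
  only on `j + m`, so operators from different pairs commute, whatever the function `csqrt` is.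
* Within a pair, both orders of composition give the square of a single root, and
  `csqrt z * csqrt z = z` (also for `z = 0`) reduces the relations to
  `-(j+m) + (j+m+1) = 1` and `(j-m+1) - (j-m) = 1`. No choice of branch matters.
-/

/-!
The generalized Jordan–Schwinger construction for sl(2,ℝ).

Fix ε (encoded by `E : ℂ` with `E = 0 ∨ E = 1/2`) and j₀ ∈ ℂ. The space W has basis
{|j,m⟩ : j ∈ j₀ + (1/2)ℤ, m − ε − (j − j₀) ∈ ℤ}, indexed by `(a,b) : ℤ × ℤ` via
j = j₀ + a/2, m = ε + a/2 + b; `single (a,b) 1` represents |j₀+a/2, ε+a/2+b⟩.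
-/

noncomputable section

/-- Principal branch of the complex square root. -/
def csqrt (z : ℂ) : ℂ := z ^ ((1 : ℂ) / 2)

/-- C₊(j,m) = i √(j-m) √(j+m+1). -/
def Cp (j m : ℂ) : ℂ := Complex.I * csqrt (j - m) * csqrt (j + m + 1)

/-- C₋(j,m) = i √(j+m) √(j-m+1). -/
def Cm (j m : ℂ) : ℂ := Complex.I * csqrt (j + m) * csqrt (j - m + 1)

/-- The Jordan–Schwinger space W. -/
abbrev WJS := (ℤ × ℤ) →₀ ℂ

/-- j = j₀ + a/2. -/
def jl (j₀ : ℂ) (a : ℤ) : ℂ := j₀ + (a : ℂ) / 2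

/-- m = ε + a/2 + b. -/
def ml (E : ℂ) (a b : ℤ) : ℂ := E + (a : ℂ) / 2 + (b : ℂ)

/-- T₋ |j,m⟩ = √(j−m+1) |j+1/2, m−1/2⟩. -/
def Tm (j₀ E : ℂ) : WJS →ₗ[ℂ] WJS :=
  Finsupp.lsum ℂ fun p => LinearMap.toSpanSingleton ℂ WJS
    (Finsupp.single (p.1 + 1, p.2 - 1) (csqrt (jl j₀ p.1 - ml E p.1 p.2 + 1)))

/-- T₊ |j,m⟩ = √(j+m+1) |j+1/2, m+1/2⟩. -/
def Tp (j₀ E : ℂ) : WJS →ₗ[ℂ] WJS :=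
  Finsupp.lsum ℂ fun p => LinearMap.toSpanSingleton ℂ WJS
    (Finsupp.single (p.1 + 1, p.2) (csqrt (jl j₀ p.1 + ml E p.1 p.2 + 1)))

/-- T̃₋ |j,m⟩ = −√(j+m) |j−1/2, m−1/2⟩. -/
def Ttm (j₀ E : ℂ) : WJS →ₗ[ℂ] WJS :=
  Finsupp.lsum ℂ fun p => LinearMap.toSpanSingleton ℂ WJS
    (Finsupp.single (p.1 - 1, p.2) (-csqrt (jl j₀ p.1 + ml E p.1 p.2)))

/-- T̃₊ |j,m⟩ = √(j−m) |j−1/2, m+1/2⟩. -/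
def Ttp (j₀ E : ℂ) : WJS →ₗ[ℂ] WJS :=
  Finsupp.lsum ℂ fun p => LinearMap.toSpanSingleton ℂ WJS
    (Finsupp.single (p.1 - 1, p.2 + 1) (csqrt (jl j₀ p.1 - ml E p.1 p.2)))

theorem csqrt_mul_self (z : ℂ) : csqrt z * csqrt z = z := by
  have h := Complex.cpow_nat_inv_pow z (n := 2) two_ne_zero
  rw [pow_two] at h
  simpa [csqrt] using h

theorem Tm_single (j₀ E : ℂ) (a b : ℤ) (c : ℂ) :
    Tm j₀ E (Finsupp.single (a, b) c) =
      Finsupp.single (a + 1, b - 1) (c * csqrt (jl j₀ a - ml E a b + 1)) := by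
  simp [Tm]

theorem Tp_single (j₀ E : ℂ) (a b : ℤ) (c : ℂ) :
    Tp j₀ E (Finsupp.single (a, b) c) =
      Finsupp.single (a + 1, b) (c * csqrt (jl j₀ a + ml E a b + 1)) := by
  simp [Tp]

theorem Ttm_single (j₀ E : ℂ) (a b : ℤ) (c : ℂ) :
    Ttm j₀ E (Finsupp.single (a, b) c) =
      Finsupp.single (a - 1, b) (c * -csqrt (jl j₀ a + ml E a b)) := by
  simp [Ttm]

theorem Ttp_single (j₀ E : ℂ) (a b : ℤ) (c : ℂ) :
    Ttp j₀ E (Finsupp.single (a, b) c) =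
      Finsupp.single (a - 1, b + 1) (c * csqrt (jl j₀ a - ml E a b)) := by
  simp [Ttp]

theorem commutator_eq_of_single (A B C : WJS →ₗ[ℂ] WJS)
    (h : ∀ a b : ℤ, A (B (Finsupp.single (a, b) 1)) - B (A (Finsupp.single (a, b) 1)) =
      C (Finsupp.single (a, b) 1)) :
    A ∘ₗ B - B ∘ₗ A = C := by
  refine Finsupp.lhom_ext' fun p => LinearMap.ext_ring ?_
  simpa using h p.1 p.2

theorem single_sub_single_eq_zero {p q : ℤ × ℤ} {x y : ℂ} (hp : p = q) (hx : x = y) :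
    (Finsupp.single p x - Finsupp.single q y : WJS) = 0 := by
  rw [hp, hx, sub_self]

/-- The operators T_±, T̃_± satisfy the Heisenberg commutation relations
[T₊,T̃₋] = [T̃₊,T₋] = 1, all other commutators vanishing. -/
theorem heisenberg_relations (j₀ E : ℂ) (hE : E = 0 ∨ E = 1 / 2) :
    Tp j₀ E ∘ₗ Ttm j₀ E - Ttm j₀ E ∘ₗ Tp j₀ E = LinearMap.id ∧
    Ttp j₀ E ∘ₗ Tm j₀ E - Tm j₀ E ∘ₗ Ttp j₀ E = LinearMap.id ∧
    Tp j₀ E ∘ₗ Tm j₀ E - Tm j₀ E ∘ₗ Tp j₀ E = 0 ∧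
    Ttp j₀ E ∘ₗ Ttm j₀ E - Ttm j₀ E ∘ₗ Ttp j₀ E = 0 ∧
    Tp j₀ E ∘ₗ Ttp j₀ E - Ttp j₀ E ∘ₗ Tp j₀ E = 0 ∧
    Tm j₀ E ∘ₗ Ttm j₀ E - Ttm j₀ E ∘ₗ Tm j₀ E = 0 := by
  refine ⟨?_, ?_, ?_, ?_, ?_, ?_⟩ <;> refine commutator_eq_of_single _ _ _ fun a b => ?_ <;>
    simp only [Tm_single, Tp_single, Ttm_single, Ttp_single, one_mul, LinearMap.id_apply,
      LinearMap.zero_apply]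
  -- Both square roots have argument `j + m` in `T₊ T̃₋`, and `j + m + 1` in `T̃₋ T₊`.
  · have h₁ : jl j₀ (a - 1) + ml E (a - 1) b + 1 = jl j₀ a + ml E a b := by
      simp only [jl, ml]; push_cast; ring
    have h₂ : jl j₀ (a + 1) + ml E (a + 1) b = jl j₀ a + ml E a b + 1 := by
      simp only [jl, ml]; push_cast; ring
    rw [h₁, h₂, neg_mul, mul_neg, csqrt_mul_self, csqrt_mul_self, sub_add_cancel,
      add_sub_cancel_right, ← Finsupp.single_sub]
    congr 1; ring
  -- Both square roots have argument `j - m + 1` in `T̃₊ T₋`, and `j - m` in `T₋ T̃₊`.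
  · have h₁ : jl j₀ (a + 1) - ml E (a + 1) (b - 1) = jl j₀ a - ml E a b + 1 := by
      simp only [jl, ml]; push_cast; ring
    have h₂ : jl j₀ (a - 1) - ml E (a - 1) (b + 1) + 1 = jl j₀ a - ml E a b := by
      simp only [jl, ml]; push_cast; ring
    rw [h₁, h₂, csqrt_mul_self, csqrt_mul_self, sub_add_cancel, sub_add_cancel,
      add_sub_cancel_right, add_sub_cancel_right, ← Finsupp.single_sub]
    congr 1; ring
  · have h₁ : jl j₀ (a + 1) + ml E (a + 1) (b - 1) + 1 = jl j₀ a + ml E a b + 1 := by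
      simp only [jl, ml]; push_cast; ring
    have h₂ : jl j₀ (a + 1) - ml E (a + 1) b + 1 = jl j₀ a - ml E a b + 1 := by
      simp only [jl, ml]; push_cast; ring
    rw [h₁, h₂]
    exact single_sub_single_eq_zero rfl (mul_comm _ _)
  · have h₁ : jl j₀ (a - 1) - ml E (a - 1) b = jl j₀ a - ml E a b := by
      simp only [jl, ml]; push_cast; ring
    have h₂ : jl j₀ (a - 1) + ml E (a - 1) (b + 1) = jl j₀ a + ml E a b := by
      simp only [jl, ml]; push_cast; ring
    rw [h₁, h₂]
    exact single_sub_single_eq_zero rfl (mul_comm _ _)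
  · have h₁ : jl j₀ (a - 1) + ml E (a - 1) (b + 1) + 1 = jl j₀ a + ml E a b + 1 := by
      simp only [jl, ml]; push_cast; ring
    have h₂ : jl j₀ (a + 1) - ml E (a + 1) b = jl j₀ a - ml E a b := by
      simp only [jl, ml]; push_cast; ring
    rw [h₁, h₂]
    exact single_sub_single_eq_zero (by simp) (mul_comm _ _)
  · have h₁ : jl j₀ (a - 1) - ml E (a - 1) b + 1 = jl j₀ a - ml E a b + 1 := by
      simp only [jl, ml]; push_cast; ring
    have h₂ : jl j₀ (a + 1) + ml E (a + 1) (b - 1) = jl j₀ a + ml E a b := by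
      simp only [jl, ml]; push_cast; ring
    rw [h₁, h₂]
    exact single_sub_single_eq_zero (by simp) (mul_comm _ _)

end
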